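/- Let V₁ ⊆ ℝⁿ and V₂ ⊆ ℝᵐ be subsets and let χ : ℝⁿ → ℝᵐ be a map with χ(V₁) ⊆ V₂. Then the following are equivalent: (i) for every function g : ℝᵐ → ℝ that is locally smoothly extendable on V₂, the composition g ∘ χ is locally smoothly extendable on V₁; (ii) χ is locally smoothly extendable on V₁, i.e., for every x ∈ V₁ there exist an open set W ⊆ ℝⁿ with x ∈ W and a C^∞ map X : ℝⁿ → ℝᵐ agreeing with χ on W ∩ V₁. -/

import Mathlib

/-- A function `f : ℝⁿ → ℝ` is locally smoothly extendable on `V ⊆ ℝⁿ` if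
for every `x ∈ V` there are an open set `W ∋ x` and a `C^∞` function
`F : ℝⁿ → ℝ` with `f = F` on `W ∩ V`. -/
def LocSmoothExtFun {n : ℕ} (V : Set (Fin n → ℝ)) (f : (Fin n → ℝ) → ℝ) : Prop :=
  ∀ x ∈ V, ∃ W : Set (Fin n → ℝ), IsOpen W ∧ x ∈ W ∧
    ∃ F : (Fin n → ℝ) → ℝ, ContDiff ℝ (⊤ : ℕ∞) F ∧ ∀ y ∈ W ∩ V, f y = F y

/-- A map `ψ : ℝⁿ → ℝᵐ` is locally smoothly extendable on `V ⊆ ℝⁿ` if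
for every `x ∈ V` there are an open set `W ∋ x` and a `C^∞` map
`Ψ : ℝⁿ → ℝᵐ` with `ψ = Ψ` on `W ∩ V`. -/
def LocSmoothExtMap {n m : ℕ} (V : Set (Fin n → ℝ))
    (ψ : (Fin n → ℝ) → (Fin m → ℝ)) : Prop :=
  ∀ x ∈ V, ∃ W : Set (Fin n → ℝ), IsOpen W ∧ x ∈ W ∧
    ∃ Ψ : (Fin n → ℝ) → (Fin m → ℝ), ContDiff ℝ (⊤ : ℕ∞) Ψ ∧ ∀ y ∈ W ∩ V, ψ y = Ψ y

/-!
Smooth extensions can be composed, and the composite is still an extension near the given point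
because a locally extendable map is continuous on its domain. Conversely, the coordinates of the
target are smooth test functions; finitely many local extensions of the coordinates live on a
common neighbourhood, where they assemble to a local extension of the map.
-/

section ContDiffExtendableOn

open Filter Set
open scoped Topology

variable {𝕜 E F G : Type*} [NontriviallyNormedField 𝕜]
  [NormedAddCommGroup E] [NormedSpace 𝕜 E] [NormedAddCommGroup F] [NormedSpace 𝕜 F]
  [NormedAddCommGroup G] [NormedSpace 𝕜 G]
  {k : WithTop ℕ∞} {s : Set E} {t : Set F} {f : E → F} {g : F → G}

variable (𝕜 k) in
/-- Local extendability of `f` from `s` to `C^k` maps on the ambient space: the notion of a `C^k`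
map on an arbitrary subset, regarded as a differential subspace. "Locally" is encoded by the
filter `𝓝[s] x`. It is stronger than `ContDiffOn`, which only asks for Taylor series within `s`. -/
def ContDiffExtendableOn (f : E → F) (s : Set E) : Prop :=
  ∀ x ∈ s, ∃ Φ : E → F, ContDiff 𝕜 k Φ ∧ f =ᶠ[𝓝[s] x] Φ

theorem contDiffExtendableOn_iff_exists_isOpen :
    ContDiffExtendableOn 𝕜 k f s ↔
      ∀ x ∈ s, ∃ W : Set E, IsOpen W ∧ x ∈ W ∧
        ∃ Φ : E → F, ContDiff 𝕜 k Φ ∧ ∀ y ∈ W ∩ s, f y = Φ y := by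
  refine forall₂_congr fun x _ ↦ ⟨?_, ?_⟩
  · rintro ⟨Φ, hΦ, hfΦ⟩
    obtain ⟨W, hW, hxW, heq⟩ := mem_nhdsWithin.1 hfΦ
    exact ⟨W, hW, hxW, Φ, hΦ, heq⟩
  · rintro ⟨W, hW, hxW, Φ, hΦ, heq⟩
    exact ⟨Φ, hΦ, mem_nhdsWithin.2 ⟨W, hW, hxW, heq⟩⟩

namespace ContDiffExtendableOn

theorem of_contDiff (hf : ContDiff 𝕜 k f) : ContDiffExtendableOn 𝕜 k f s :=
  fun _ _ ↦ ⟨f, hf, .rfl⟩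

theorem continuousOn (hf : ContDiffExtendableOn 𝕜 k f s) : ContinuousOn f s := by
  intro x hx
  obtain ⟨Φ, hΦ, hfΦ⟩ := hf x hx
  exact hΦ.continuous.continuousWithinAt.congr_of_eventuallyEq_of_mem hfΦ hx

theorem comp (hg : ContDiffExtendableOn 𝕜 k g t) (hf : ContDiffExtendableOn 𝕜 k f s)
    (hst : MapsTo f s t) : ContDiffExtendableOn 𝕜 k (g ∘ f) s := by
  intro x hx
  obtain ⟨Φ, hΦ, hfΦ⟩ := hf x hx
  obtain ⟨Γ, hΓ, hgΓ⟩ := hg (f x) (hst hx)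
  have f_tendsto : Tendsto f (𝓝[s] x) (𝓝[t] (f x)) :=
    (hf.continuousOn x hx).tendsto_nhdsWithin hst
  have hgf : g ∘ f =ᶠ[𝓝[s] x] Γ ∘ f := hgΓ.comp_tendsto f_tendsto
  exact ⟨Γ ∘ Φ, hΓ.comp hΦ, hgf.trans (hfΦ.fun_comp Γ)⟩

theorem pi {ι : Type*} [Fintype ι] {H : ι → Type*}
    [∀ i, NormedAddCommGroup (H i)] [∀ i, NormedSpace 𝕜 (H i)] {f : E → ∀ i, H i}
    (hf : ∀ i, ContDiffExtendableOn 𝕜 k (fun x ↦ f x i) s) : ContDiffExtendableOn 𝕜 k f s := by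
  intro x hx
  choose Φ hΦ hfΦ using fun i ↦ hf i x hx
  refine ⟨fun y i ↦ Φ i y, contDiff_pi.2 hΦ, ?_⟩
  filter_upwards [eventually_all.2 hfΦ] with y hy using funext hy

end ContDiffExtendableOn

theorem contDiffExtendableOn_iff_forall_strongDual [CompleteSpace 𝕜] [FiniteDimensional 𝕜 F] :
    ContDiffExtendableOn 𝕜 k f s ↔
      ∀ ℓ : StrongDual 𝕜 F, ContDiffExtendableOn 𝕜 k (ℓ ∘ f) s := by
  refine ⟨fun hf ℓ ↦ (ContDiffExtendableOn.of_contDiff ℓ.contDiff).comp hf (mapsTo_univ f s),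
    fun hf ↦ ?_⟩
  let e := (Module.finBasis 𝕜 F).equivFunL
  have coords : ContDiffExtendableOn 𝕜 k (e ∘ f) s :=
    .pi fun i ↦ hf ((ContinuousLinearMap.proj i).comp e.toContinuousLinearMap)
  have e_symm_comp : e.symm ∘ (e ∘ f) = f := funext fun x ↦ e.symm_apply_apply (f x)
  rw [← e_symm_comp]
  exact (ContDiffExtendableOn.of_contDiff e.symm.contDiff).comp coords (mapsTo_univ _ s)

theorem stmt_7_general [CompleteSpace 𝕜] [FiniteDimensional 𝕜 F] (hst : MapsTo f s t) :
    (∀ g : F → 𝕜, ContDiffExtendableOn 𝕜 k g t → ContDiffExtendableOn 𝕜 k (g ∘ f) s) ↔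
      ContDiffExtendableOn 𝕜 k f s := by
  refine ⟨fun h ↦ ?_, fun hf g hg ↦ hg.comp hf hst⟩
  exact contDiffExtendableOn_iff_forall_strongDual.2 fun ℓ ↦ h ℓ (.of_contDiff ℓ.contDiff)

end ContDiffExtendableOn

theorem locSmoothExtFun_iff_contDiffExtendableOn {n : ℕ} {V : Set (Fin n → ℝ)}
    {f : (Fin n → ℝ) → ℝ} :
    LocSmoothExtFun V f ↔ ContDiffExtendableOn ℝ (⊤ : ℕ∞) f V :=
  contDiffExtendableOn_iff_exists_isOpen.symm

theorem locSmoothExtMap_iff_contDiffExtendableOn {n m : ℕ} {V : Set (Fin n → ℝ)}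
    {ψ : (Fin n → ℝ) → (Fin m → ℝ)} :
    LocSmoothExtMap V ψ ↔ ContDiffExtendableOn ℝ (⊤ : ℕ∞) ψ V :=
  contDiffExtendableOn_iff_exists_isOpen.symm

/-- Sikorski smoothness and Aronszajn smoothness coincide for maps between
differential subspaces of Euclidean spaces (Theorem 6). -/
theorem stmt_7 {n m : ℕ} (V₁ : Set (Fin n → ℝ)) (V₂ : Set (Fin m → ℝ))
    (χ : (Fin n → ℝ) → (Fin m → ℝ)) (hmaps : Set.MapsTo χ V₁ V₂) :
    (∀ g : (Fin m → ℝ) → ℝ, LocSmoothExtFun V₂ g →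
      LocSmoothExtFun V₁ (g ∘ χ)) ↔ LocSmoothExtMap V₁ χ := by
  simpa only [locSmoothExtFun_iff_contDiffExtendableOn, locSmoothExtMap_iff_contDiffExtendableOn]
    using stmt_7_general hmaps
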